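/- arXiv:2210.12183 — 2 statements merged into one kernel-verified Lean document; each statement's English description precedes it below -/
import Mathlib

section
/- Suppose k_i = k for all i ∈ [n]. Then the number of x ∈ 𝔽_q^N with w_{(P,w,π)}(x) = n·M_w is (q^k − (q − |D_{M_w}|)^k)^t · q^{k(n−t)}, where t is the number of maximal elements of the poset P. -/
open scoped Classical

noncomputable section

variable {F : Type*} [Field F] [Fintype F]
variable {ι : Type*} [Fintype ι] [PartialOrder ι]

/-- The block weight induced by `w`: the maximum of the weights of the coordinates. -/
def blockWt (w : F → ℕ) {m : ℕ} (v : Fin m → F) : ℕ :=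
  Finset.univ.sup fun t => w (v t)

/-- `M_w`, the maximum weight of an element of `F`. -/
def maxWt (w : F → ℕ) : ℕ := Finset.univ.sup w

/-- `D_r = {α ∈ F : w(α) = r}`. -/
def Dset (w : F → ℕ) (r : ℕ) : Finset F := Finset.univ.filter fun a => w a = r

/-- `D_r^k = {v ∈ F^k : w̃^k(v) = r}`. -/
def Dk (w : F → ℕ) (m r : ℕ) : Finset (Fin m → F) :=
  Finset.univ.filter fun v => blockWt w v = r

/-- The order ideal (down-set) of the poset generated by a finite set `A`. -/
def genIdeal (A : Finset ι) : Finset ι := Finset.univ.filter fun i => ∃ j ∈ A, i ≤ j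

/-- The set of maximal elements of a finite set `I`. -/
def maxElems (I : Finset ι) : Finset ι := I.filter fun i => ∀ j ∈ I, i ≤ j → j = i

/-- `I` is an order ideal (down-set) of the poset. -/
def IsIdeal (I : Finset ι) : Prop := ∀ a b : ι, a ≤ b → b ∈ I → a ∈ I

/-- The collection `𝓘_j^i` of ideals of cardinality `i` with exactly `j` maximal elements. -/
def idealsWithMax (ι : Type*) [Fintype ι] [PartialOrder ι] (j i : ℕ) : Finset (Finset ι) :=
  Finset.univ.filter fun I => IsIdeal I ∧ I.card = i ∧ (maxElems I).card = j

/-- The π-support of a block vector. -/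
def suppPi (k : ι → ℕ) (x : ∀ i, Fin (k i) → F) : Finset ι :=
  Finset.univ.filter fun i => x i ≠ 0

/-- The `(P,w,π)`-weight. -/
def wtP (w : F → ℕ) (k : ι → ℕ) (x : ∀ i, Fin (k i) → F) : ℕ :=
  ∑ i ∈ maxElems (genIdeal (suppPi k x)), blockWt w (x i)
    + maxWt w * ((genIdeal (suppPi k x)) \ maxElems (genIdeal (suppPi k x))).card

/-- The `(P,w,π)`-distance. -/
def dP (w : F → ℕ) (k : ι → ℕ) (x y : ∀ i, Fin (k i) → F) : ℕ := wtP w k (x - y)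

theorem blockWt_le_aux (w : F → ℕ) {m : ℕ} (v : Fin m → F) : blockWt w v ≤ maxWt w := by
  unfold blockWt maxWt
  exact Finset.sup_le fun t _ => Finset.le_sup (f := w) (Finset.mem_univ _)

theorem maxWt_pos_aux (w : F → ℕ) (hw0 : ∀ a : F, w a = 0 ↔ a = 0) : 0 < maxWt w := by
  have h1 : w 1 ≠ 0 := fun h => one_ne_zero ((hw0 1).1 h)
  have h2 : w 1 ≤ maxWt w := Finset.le_sup (f := w) (Finset.mem_univ _)
  omega

theorem blockWt_eq_iff_aux (w : F → ℕ) (hw0 : ∀ a : F, w a = 0 ↔ a = 0) {m : ℕ}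
    (v : Fin m → F) : blockWt w v = maxWt w ↔ ∃ t, w (v t) = maxWt w := by
  have hM := maxWt_pos_aux w hw0
  constructor
  · intro h
    have hne : (Finset.univ : Finset (Fin m)).Nonempty := by
      by_contra hc
      rw [Finset.not_nonempty_iff_eq_empty] at hc
      unfold blockWt at h
      rw [hc, Finset.sup_empty] at h
      simp at h
      omega
    obtain ⟨t, _, ht⟩ := Finset.exists_mem_eq_sup _ hne (fun t => w (v t))
    exact ⟨t, by rw [← ht]; exact h⟩
  · rintro ⟨t, ht⟩
    apply le_antisymm (blockWt_le_aux w v)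
    rw [← ht]
    exact Finset.le_sup (f := fun t => w (v t)) (Finset.mem_univ t)

theorem card_Dk_aux (w : F → ℕ) (hw0 : ∀ a : F, w a = 0 ↔ a = 0) (k : ℕ) :
    (Dk w k (maxWt w)).card =
      Fintype.card F ^ k - (Fintype.card F - (Dset w (maxWt w)).card) ^ k := by
  have h : Dk w k (maxWt w) = (Fintype.piFinset fun _ : Fin k => (Dset w (maxWt w))ᶜ)ᶜ := by
    ext v
    simp [Dk, Dset, blockWt_eq_iff_aux w hw0]
  rw [h, Finset.card_compl, Fintype.card_piFinset]
  simp [Finset.card_compl]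

theorem wtP_eq_iff_aux (w : F → ℕ) (hw0 : ∀ a : F, w a = 0 ↔ a = 0) (k : ι → ℕ)
    (x : ∀ i, Fin (k i) → F) :
    wtP w k x = Fintype.card ι * maxWt w ↔
      ∀ i ∈ maxElems (Finset.univ : Finset ι), blockWt w (x i) = maxWt w := by
  have hM := maxWt_pos_aux w hw0
  have hsplit : ∀ I : Finset ι, (I \ maxElems I).card + (maxElems I).card = I.card := fun I =>
    Finset.card_sdiff_add_card_eq_card (Finset.filter_subset _ _)
  have hsum : ∀ I : Finset ι, ∑ i ∈ I, blockWt w (x i) ≤ I.card * maxWt w := fun I =>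
    Finset.sum_le_card_nsmul _ _ _ fun i _ => blockWt_le_aux w (x i)
  constructor
  · intro h
    unfold wtP at h
    have hI : genIdeal (suppPi k x) = Finset.univ := by
      rw [← Finset.card_eq_iff_eq_univ]
      apply le_antisymm (Finset.card_le_univ _)
      have h1 := hsplit (genIdeal (suppPi k x))
      have h2 := hsum (maxElems (genIdeal (suppPi k x)))
      apply Nat.le_of_mul_le_mul_right _ hM
      rw [← h, ← h1]
      linarith
    rw [hI] at h
    have h1 := hsplit (Finset.univ : Finset ι)
    rw [Finset.card_univ] at h1
    rw [← h1] at h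
    have h3 : ∑ i ∈ maxElems (Finset.univ : Finset ι), blockWt w (x i) =
        ∑ i ∈ maxElems (Finset.univ : Finset ι), maxWt w := by
      rw [Finset.sum_const, smul_eq_mul]
      linarith
    exact (Finset.sum_eq_sum_iff_of_le fun i _ => blockWt_le_aux w (x i)).1 h3
  · intro h
    have hI : genIdeal (suppPi k x) = Finset.univ := by
      ext i
      simp only [genIdeal, Finset.mem_filter, Finset.mem_univ, true_and, iff_true]
      obtain ⟨j, hij, hj⟩ := Finite.exists_le_maximal (p := fun _ : ι => True) (a := i) trivial
      refine ⟨j, ?_, hij⟩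
      have hjm : j ∈ maxElems (Finset.univ : Finset ι) := by
        simp only [maxElems, Finset.mem_filter, Finset.mem_univ, true_and]
        intro l _ hl
        exact le_antisymm (hj.2 trivial hl) hl
      have hb := h j hjm
      simp only [suppPi, Finset.mem_filter, Finset.mem_univ, true_and]
      intro h0
      obtain ⟨t, ht⟩ := (blockWt_eq_iff_aux w hw0 _).1 hb
      rw [h0, Pi.zero_apply, (hw0 0).2 rfl] at ht
      omega
    unfold wtP
    rw [hI, Finset.sum_congr rfl h, Finset.sum_const, smul_eq_mul]
    have h1 := hsplit (Finset.univ : Finset ι)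
    rw [Finset.card_univ] at h1
    rw [← h1]
    ring

/-- when all blocks have dimension `k`, the number of vectors of maximal
`(P,w,π)`-weight `n·M_w` is `(q^k - (q - |D_{M_w}|)^k)^t · q^{k(n-t)}`, where `t` is the number
of maximal elements of the poset `P`. -/
theorem stmt5 (w : F → ℕ) (hw0 : ∀ a : F, w a = 0 ↔ a = 0)
    (hwneg : ∀ a : F, w (-a) = w a) (hwadd : ∀ a b : F, w (a + b) ≤ w a + w b)
    (k : ℕ) :
    (Finset.univ.filter fun x : ∀ _ : ι, Fin k → F =>
        wtP w (fun _ => k) x = Fintype.card ι * maxWt w).card =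
      (Fintype.card F ^ k - (Fintype.card F - (Dset w (maxWt w)).card) ^ k) ^
          (maxElems (Finset.univ : Finset ι)).card *
        Fintype.card F ^ (k * (Fintype.card ι - (maxElems (Finset.univ : Finset ι)).card)) := by
  have hset : (Finset.univ.filter fun x : ∀ _ : ι, Fin k → F =>
      wtP w (fun _ => k) x = Fintype.card ι * maxWt w) =
      Fintype.piFinset fun i : ι =>
        if i ∈ maxElems (Finset.univ : Finset ι) then Dk w k (maxWt w) else Finset.univ := by
    ext x
    rw [Finset.mem_filter, wtP_eq_iff_aux w hw0, Fintype.mem_piFinset]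
    simp only [Finset.mem_univ, true_and]
    refine forall_congr' fun i => ?_
    by_cases hi : i ∈ maxElems (Finset.univ : Finset ι) <;> simp [hi, Dk]
  rw [hset, Fintype.card_piFinset]
  simp only [apply_ite Finset.card]
  rw [Finset.prod_ite, Finset.prod_const, Finset.prod_const, card_Dk_aux w hw0]
  have e1 : (Finset.univ.filter fun i : ι => i ∈ maxElems (Finset.univ : Finset ι)) =
      maxElems (Finset.univ : Finset ι) := by ext; simp
  have e2 : (Finset.univ.filter fun i : ι => i ∉ maxElems (Finset.univ : Finset ι)) =
      (maxElems (Finset.univ : Finset ι))ᶜ := by ext; simp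
  rw [e1, e2, Finset.card_compl, pow_mul]
  simp
end
end

section
/- Let w be the Hamming weight on 𝔽_q (w(α) = 1 for α ≠ 0, w(0) = 0), so that w_{(P,w,π)}(x) = w_{(P,π)}(x) = |⟨supp_π(x)⟩|. Then for any 1 ≤ r ≤ n, the number of x ∈ 𝔽_q^N with w_{(P,π)}(x) = r is |A_r| = Σ_{j=1}^{r} Σ_{I ∈ 𝓘_j^r} (q^{k_{i_1}}−1)(q^{k_{i_2}}−1)⋯(q^{k_{i_j}}−1) · q^{k_{l_1}+k_{l_2}+⋯+k_{l_{r−j}}}, where for I ∈ 𝓘_j^r we write Max(I) = {i_1,…,i_j} and I ∖ Max(I) = {l_1,…,l_{r−j}}. Moreover, if k_i = k for all i ∈ [n], then |A_r| = Σ_{j=1}^{r} Σ_{I ∈ 𝓘_j^r} (q^k−1)^j · q^{k(r−j)}. -/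
open scoped Classical

noncomputable section

variable {F : Type*} [Field F] [Fintype F]
variable {ι : Type*} [Fintype ι] [PartialOrder ι]

/-- The `(P,π)`-weight: the cardinality of the ideal generated by the π-support. -/
def wtPpi (k : ι → ℕ) (x : ∀ i, Fin (k i) → F) : ℕ := (genIdeal (suppPi k x)).card

theorem aux_max_sub (A : Finset ι) : maxElems (genIdeal A) ⊆ A := by
  intro i hi
  simp only [maxElems, genIdeal, Finset.mem_filter, Finset.mem_univ, true_and] at hi
  obtain ⟨⟨j, hj, hij⟩, h⟩ := hi
  have := h j ⟨j, hj, le_rfl⟩ hij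
  exact this ▸ hj

theorem aux_isIdeal (A : Finset ι) : IsIdeal (genIdeal A) := by
  intro a b hab hb
  simp only [genIdeal, Finset.mem_filter, Finset.mem_univ, true_and] at hb ⊢
  obtain ⟨j, hj, h⟩ := hb
  exact ⟨j, hj, hab.trans h⟩

theorem aux_exists_max (I : Finset ι) (i : ι) (hi : i ∈ I) : ∃ j ∈ maxElems I, i ≤ j := by
  obtain ⟨m, him, hm⟩ := I.exists_le_maximal hi
  refine ⟨m, ?_, him⟩
  simp only [maxElems, Finset.mem_filter]
  exact ⟨hm.prop, fun j hj hmj => le_antisymm (hm.le_of_ge hj hmj) hmj⟩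

theorem aux_gen_iff (I A : Finset ι) (hI : IsIdeal I) :
    genIdeal A = I ↔ maxElems I ⊆ A ∧ A ⊆ I := by
  constructor
  · rintro rfl
    refine ⟨aux_max_sub A, fun i hi => ?_⟩
    simp only [genIdeal, Finset.mem_filter, Finset.mem_univ, true_and]
    exact ⟨i, hi, le_rfl⟩
  · rintro ⟨h1, h2⟩
    ext i
    simp only [genIdeal, Finset.mem_filter, Finset.mem_univ, true_and]
    constructor
    · rintro ⟨j, hj, hij⟩
      exact hI i j hij (h2 hj)
    · intro hi
      obtain ⟨j, hj, hij⟩ := aux_exists_max I i hi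
      exact ⟨j, h1 hj, hij⟩

theorem aux_count (k : ι → ℕ) (I : Finset ι) (hI : IsIdeal I) :
    (Finset.univ.filter fun x : ∀ i, Fin (k i) → F => genIdeal (suppPi k x) = I).card =
      (∏ i ∈ maxElems I, (Fintype.card F ^ k i - 1)) *
          Fintype.card F ^ (∑ l ∈ I \ maxElems I, k l) := by
  have hsub : maxElems I ⊆ I := Finset.filter_subset _ _
  have h1 : (Finset.univ.filter fun x : ∀ i, Fin (k i) → F => genIdeal (suppPi k x) = I) =
      Fintype.piFinset (fun i => if i ∈ maxElems I then Finset.univ.erase (0 : Fin (k i) → F)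
        else if i ∈ I then Finset.univ else {0}) := by
    ext x
    simp only [Finset.mem_filter, Finset.mem_univ, true_and, Fintype.mem_piFinset,
      aux_gen_iff _ _ hI]
    constructor
    · rintro ⟨h1, h2⟩ i
      split_ifs with h3 h4
      · simpa [suppPi] using h1 h3
      · simp
      · have : i ∉ suppPi k x := fun h => h4 (h2 h)
        simpa [suppPi] using this
    · intro h
      constructor
      · intro i hi
        have := h i
        rw [if_pos hi] at this
        simpa [suppPi] using this
      · intro i hi
        by_contra hc
        have := h i
        rw [if_neg (fun h => hc (hsub h)), if_neg hc] at this
        simp [suppPi] at hi this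
        exact hi this
  have h2 : ∀ i, (if i ∈ maxElems I then Finset.univ.erase (0 : Fin (k i) → F)
        else if i ∈ I then Finset.univ else {0}).card =
      (if i ∈ maxElems I then (Fintype.card F ^ k i - 1) else 1) *
      (if i ∈ I \ maxElems I then Fintype.card F ^ k i else 1) := by
    intro i
    by_cases h3 : i ∈ maxElems I
    · simp [h3]
    · by_cases h4 : i ∈ I <;> simp [h3, h4]
  rw [h1, Fintype.card_piFinset, Finset.prod_congr rfl (fun i _ => h2 i), Finset.prod_mul_distrib,
    ← Finset.prod_pow_eq_pow_sum]
  simp only [Finset.prod_ite_mem, Finset.univ_inter]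

theorem aux_total (k : ι → ℕ) (r : ℕ) (hr1 : 1 ≤ r) :
    (Finset.univ.filter fun x : ∀ i, Fin (k i) → F => wtPpi k x = r).card =
      ∑ j ∈ Finset.Icc 1 r, ∑ I ∈ idealsWithMax ι j r,
        (∏ i ∈ maxElems I, (Fintype.card F ^ k i - 1)) *
          Fintype.card F ^ (∑ l ∈ I \ maxElems I, k l) := by
  have hmap : ∀ I ∈ (Finset.univ.filter fun I : Finset ι => IsIdeal I ∧ I.card = r),
      (maxElems I).card ∈ Finset.Icc 1 r := by
    intro I hI
    simp only [Finset.mem_filter, Finset.mem_univ, true_and] at hI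
    have hne : I.Nonempty := Finset.card_pos.mp (by omega)
    obtain ⟨i, hi⟩ := hne
    obtain ⟨j, hj, -⟩ := aux_exists_max I i hi
    rw [Finset.mem_Icc]
    exact ⟨Finset.card_pos.mpr ⟨j, hj⟩, hI.2 ▸ Finset.card_le_card (Finset.filter_subset _ _)⟩
  have h3 : ∀ j, idealsWithMax ι j r =
      (Finset.univ.filter fun I : Finset ι => IsIdeal I ∧ I.card = r).filter
        fun I => (maxElems I).card = j := by
    intro j
    ext I
    simp [idealsWithMax, and_assoc]
  simp only [h3]
  rw [Finset.sum_fiberwise_of_maps_to hmap]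
  rw [Finset.card_eq_sum_card_fiberwise (f := fun x => genIdeal (suppPi k x))
    (t := Finset.univ.filter fun I : Finset ι => IsIdeal I ∧ I.card = r)]
  · refine Finset.sum_congr rfl fun I hI => ?_
    simp only [Finset.mem_filter, Finset.mem_univ, true_and] at hI
    rw [← aux_count (F := F) k I hI.1]
    congr 1
    ext x
    constructor
    · exact fun h => Finset.mem_filter.mpr ⟨Finset.mem_univ _, (Finset.mem_filter.mp h).2⟩
    · intro h
      have h' := (Finset.mem_filter.mp h).2
      refine Finset.mem_filter.mpr ⟨Finset.mem_filter.mpr ⟨Finset.mem_univ _, ?_⟩, h'⟩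
      rw [wtPpi, h', hI.2]
  · intro x hx
    exact Finset.mem_coe.mpr (Finset.mem_filter.mpr ⟨Finset.mem_univ _, aux_isIdeal _,
      (Finset.mem_filter.mp (Finset.mem_coe.mp hx)).2⟩)

theorem aux_wt (w : F → ℕ) (hw : ∀ a : F, w a = if a = 0 then 0 else 1)
    (k : ι → ℕ) (x : ∀ i, Fin (k i) → F) : wtP w k x = wtPpi k x := by
  have hle : ∀ a, w a ≤ 1 := fun a => by rw [hw]; split_ifs <;> simp
  have hmax : maxWt w = 1 := by
    apply le_antisymm
    · exact Finset.sup_le fun a _ => hle a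
    · have h := Finset.le_sup (f := w) (Finset.mem_univ (1 : F))
      rw [hw 1, if_neg one_ne_zero] at h
      exact h
  have hb : ∀ i ∈ maxElems (genIdeal (suppPi k x)), blockWt w (x i) = 1 := by
    intro i hi
    have hi := aux_max_sub _ hi
    simp only [suppPi, Finset.mem_filter, Finset.mem_univ, true_and] at hi
    obtain ⟨t, ht⟩ := Function.ne_iff.mp hi
    apply le_antisymm
    · exact Finset.sup_le fun a _ => hle _
    · have h := Finset.le_sup (f := fun t => w (x i t)) (Finset.mem_univ t)
      simp only [hw (x i t)] at h
      rw [if_neg (by simpa using ht)] at h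
      exact h
  have hsub : maxElems (genIdeal (suppPi k x)) ⊆ genIdeal (suppPi k x) := Finset.filter_subset _ _
  rw [wtP, wtPpi, hmax, Finset.sum_congr rfl hb, one_mul, Finset.sum_const, smul_eq_mul, mul_one,
    add_comm, Finset.card_sdiff_add_card_eq_card hsub]

/-- for `w` the Hamming weight, the `(P,w,π)`-weight is the `(P,π)`-weight
`|⟨supp_π(x)⟩|`, and the number of vectors of `(P,π)`-weight `r` is given by the stated sum over
ideals of cardinality `r`; moreover, the simplified form holds when all blocks have the same
dimension. -/
theorem stmt10 (w : F → ℕ) (hw : ∀ a : F, w a = if a = 0 then 0 else 1)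
    (k : ι → ℕ) (r : ℕ) (hr1 : 1 ≤ r) (hr2 : r ≤ Fintype.card ι) :
    (∀ x : ∀ i, Fin (k i) → F, wtP w k x = wtPpi k x) ∧
    ((Finset.univ.filter fun x : ∀ i, Fin (k i) → F => wtPpi k x = r).card =
      ∑ j ∈ Finset.Icc 1 r, ∑ I ∈ idealsWithMax ι j r,
        (∏ i ∈ maxElems I, (Fintype.card F ^ k i - 1)) *
          Fintype.card F ^ (∑ l ∈ I \ maxElems I, k l)) ∧
    (∀ m : ℕ, (∀ i, k i = m) →
      (Finset.univ.filter fun x : ∀ i, Fin (k i) → F => wtPpi k x = r).card =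
        ∑ j ∈ Finset.Icc 1 r, ∑ I ∈ idealsWithMax ι j r,
          (Fintype.card F ^ m - 1) ^ j * Fintype.card F ^ (m * (r - j))) := by
  refine ⟨aux_wt w hw k, aux_total k r hr1, fun m hm => ?_⟩
  rw [aux_total k r hr1]
  refine Finset.sum_congr rfl fun j _ => Finset.sum_congr rfl fun I hI => ?_
  simp only [idealsWithMax, Finset.mem_filter, Finset.mem_univ, true_and] at hI
  have hsub : maxElems I ⊆ I := Finset.filter_subset _ _
  simp only [hm, Finset.prod_const, Finset.sum_const, smul_eq_mul,
    Finset.card_sdiff_of_subset hsub, hI.2.1, hI.2.2]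
  rw [mul_comm (r - j) m]
end
end
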